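/- Let 0 < r < ∞ and set L := η^3 ξ^{3h}. For any finite maximal antichain Γ ⊂ Ω there exists n_0 = n_0(Γ) such that for every n ≥ n_0 there exists a family of positive integers (n_σ)_{σ∈Γ} with Σ_{σ∈Γ} n_σ ≤ n and u_{n,r}(μ_h) ≥ (Lξ^r)^{-1} Σ_{σ∈Γ} μ_h(J_σ) ‖φ'_σ‖^r u_{n_σ,r}(μ_h). -/

import Mathlib

open MeasureTheory Filter Metric

noncomputable section

/-- A cookie-cutter system on `J = [0,1]`. -/
structure CookieCutter where
  N : ℕ
  hN : 2 ≤ N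
  Jsub : Fin N → Set ℝ
  f : ℝ → ℝ
  φ : Fin N → ℝ → ℝ
  c : ℝ
  γ : ℝ
  b : ℝ
  B : ℝ
  hJsub_sub : ∀ j, Jsub j ⊆ Set.Icc 0 1
  hJsub_interval : ∀ j, ∃ u v : ℝ, u ≤ v ∧ Jsub j = Set.Icc u v
  hJsub_disj : ∀ i j, i ≠ j → Disjoint (Jsub i) (Jsub j)
  hbij : ∀ j, Set.BijOn f (Jsub j) (Set.Icc 0 1)
  hφ_maps : ∀ j, ∀ x ∈ Set.Icc (0:ℝ) 1, φ j x ∈ Jsub j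
  hφ_rinv : ∀ j, ∀ x ∈ Set.Icc (0:ℝ) 1, f (φ j x) = x
  hφ_linv : ∀ j, ∀ x ∈ Jsub j, φ j (f x) = x
  hfdiff : ∀ j, ∀ x ∈ Jsub j, DifferentiableAt ℝ f x
  hφdiff : ∀ j, ∀ x ∈ Set.Icc (0:ℝ) 1, DifferentiableAt ℝ (φ j) x
  hc : 0 < c
  hγ : γ ∈ Set.Ioc (0:ℝ) 1
  hHolder : ∀ j, ∀ x ∈ Jsub j, ∀ y ∈ Jsub j, |deriv f x - deriv f y| ≤ c * |x - y| ^ γ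
  hb : IsGLB ((fun x => |deriv f x|) '' ⋃ j, Jsub j) b
  hB : IsLUB ((fun x => |deriv f x|) '' ⋃ j, Jsub j) B
  hb1 : 1 < b

namespace CookieCutter

variable (cc : CookieCutter)

/-- `φ_σ = φ_{σ_1} ∘ ⋯ ∘ φ_{σ_n}` for a word `σ`. -/
def wordMap : List (Fin cc.N) → ℝ → ℝ
  | [] => id
  | j :: rest => cc.φ j ∘ wordMap rest

/-- The basic interval `J_σ = φ_σ(J)`. -/
def Jc (σ : List (Fin cc.N)) : Set ℝ := cc.wordMap σ '' Set.Icc 0 1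

/-- The diameter `|J_σ|`. -/
def diamJ (σ : List (Fin cc.N)) : ℝ := Metric.diam (cc.Jc σ)

/-- `‖φ'_σ‖ = sup_{x ∈ J} |φ'_σ(x)|`. -/
def φnorm (σ : List (Fin cc.N)) : ℝ :=
  sSup ((fun x => |deriv (cc.wordMap σ) x|) '' Set.Icc 0 1)

/-- The distortion constant `ξ = exp (c / (b^γ − 1))`. -/
def xi : ℝ := Real.exp (cc.c / (cc.b ^ cc.γ - 1))

/-- The cookie-cutter set `E = ⋂_{n ≥ 1} ⋃_{σ ∈ Ω_n} J_σ`. -/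
def E : Set ℝ := ⋂ (n : ℕ) (_ : 1 ≤ n), ⋃ σ : Fin n → Fin cc.N, cc.Jc (List.ofFn σ)

/-- `η = ξ^{9h}`. -/
def eta (h : ℝ) : ℝ := cc.xi ^ ((9:ℝ) * h)

/-- `L = η³ ξ^{3h}`. -/
def Lconst (h : ℝ) : ℝ := (cc.eta h) ^ 3 * cc.xi ^ ((3:ℝ) * h)

/-- A Gibbs-like measure for the cookie-cutter system: a Borel probability measure
supported on `E` with `η⁻¹|J_σ|^h ≤ μ(J_σ) ≤ η|J_σ|^h` for every word `σ`. -/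
def IsGibbsLike (μ : Measure ℝ) (h : ℝ) : Prop :=
  IsProbabilityMeasure μ ∧ μ (cc.Eᶜ) = 0 ∧
    ∀ σ : List (Fin cc.N), σ ≠ [] →
      (cc.eta h)⁻¹ * cc.diamJ σ ^ h ≤ (μ (cc.Jc σ)).toReal ∧
      (μ (cc.Jc σ)).toReal ≤ cc.eta h * cc.diamJ σ ^ h

/-- A finite maximal antichain in `Ω`. -/
def IsFMA (Γ : Finset (List (Fin cc.N))) : Prop :=
  (∀ σ ∈ Γ, σ ≠ []) ∧
  (∀ ω : ℕ → Fin cc.N, ∃ k : ℕ, 1 ≤ k ∧ (List.ofFn fun i : Fin k => ω i) ∈ Γ) ∧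
  ∀ σ ∈ Γ, ∀ τ ∈ Γ, σ <+: τ → σ = τ

end CookieCutter

/-- The `n`-th quantization error of order `r`. -/
def Vnr (μ : Measure ℝ) (n : ℕ) (r : ℝ) : ℝ :=
  sInf ((fun α : Finset ℝ => ∫ x, Metric.infDist x (α : Set ℝ) ^ r ∂μ) ''
    {α : Finset ℝ | α.Nonempty ∧ α.card ≤ n})

/-- The auxiliary quantization error `u_{n,r}` with `U = (0,1)`. -/
def unr (μ : Measure ℝ) (n : ℕ) (r : ℝ) : ℝ :=
  sInf ((fun α : Finset ℝ =>
      ∫ x, Metric.infDist x ((α : Set ℝ) ∪ (Set.Ioo (0:ℝ) 1)ᶜ) ^ r ∂μ) ''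
    {α : Finset ℝ | α.card ≤ n})

/-!
Let `n = |σ|` and `U = (0, 1)`. The map `f^n` sends `J_σ` onto `J`, and its inverse branch `φ_σ` has
distortion at most `ξ`. Hence, for `x ∈ J_σ`, the distance from `x` to `α ∪ Uᶜ` is at least
`ξ⁻¹ ‖φ'_σ‖` times the distance from `f^n x` to `f^n (α ∩ J_σ) ∪ Uᶜ`: a point outside `J_σ` is no
closer to `x` than one of the endpoints of `J_σ`, which `f^n` sends to `{0, 1} ⊆ Uᶜ`. The inequality
`μ(J_σ) μ(J_τ) ≤ C μ(J_στ)` says that the measure `μ(J_σ) μ` is dominated by `C` times the image of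
`μ|J_σ` under `f^n` on all basic intervals, hence on all Borel sets. Integrating over the disjoint
intervals `J_σ`, `σ ∈ Γ`, bounds the cost of `α` from below by the sum of the scaled costs of the
sets `f^n (α ∩ J_σ)`. These have at most `card α` points in total, and none of them is empty once
the cost of `α` is small. The infimum in `u_{n,r}` need not be attained, so `α` is chosen to
minimize the lower bound, which depends on `α` only through the finitely many possible
cardinalities.
-/

open Set Topology

section RealFunctions

theorem abs_le_exp_mul_abs {a b t : ℝ} (hb : 1 ≤ |b|) (hab : |a - b| ≤ t) :
    |a| ≤ Real.exp t * |b| :=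
  calc |a| ≤ |b| + t := by linarith [abs_sub_abs_le_abs_sub a b]
    _ ≤ |b| + t * |b| := by
      gcongr
      exact le_mul_of_one_le_right ((abs_nonneg _).trans hab) hb
    _ = (t + 1) * |b| := by ring
    _ ≤ Real.exp t * |b| := by gcongr; exact Real.add_one_le_exp t

theorem mul_abs_sub_le_abs_image_sub {f : ℝ → ℝ} {s : Set ℝ} {m : ℝ} (hs : s.OrdConnected)
    (hf : ∀ z ∈ s, DifferentiableAt ℝ f z) (hm : ∀ z ∈ s, m ≤ |deriv f z|) {x y : ℝ}
    (hx : x ∈ s) (hy : y ∈ s) : m * |x - y| ≤ |f x - f y| := by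
  wlog hxy : x < y generalizing x y
  · rcases (not_lt.1 hxy).eq_or_lt with rfl | hlt
    · simp
    · rw [abs_sub_comm x, abs_sub_comm (f x)]
      exact this hy hx hlt
  have hsub : Icc x y ⊆ s := hs.out hx hy
  obtain ⟨z, hz, hslope⟩ := exists_deriv_eq_slope f hxy
    (fun z hz => (hf z (hsub hz)).continuousAt.continuousWithinAt)
    fun z hz => (hf z (hsub (Ioo_subset_Icc_self hz))).differentiableWithinAt
  have hmz := hm z (hsub (Ioo_subset_Icc_self hz))
  rwa [hslope, abs_div, le_div_iff₀ (abs_pos.2 (sub_pos.2 hxy).ne'), abs_sub_comm y,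
    abs_sub_comm (f y)] at hmz

theorem abs_sub_left_le_or_abs_sub_right_le {a b x p : ℝ} (hx : x ∈ uIcc a b)
    (hp : p ∉ uIoo a b) : |x - a| ≤ |x - p| ∨ |x - b| ≤ |x - p| := by
  wlog hab : a ≤ b generalizing a b
  · exact (this (uIcc_comm a b ▸ hx) (uIoo_comm a b ▸ hp) (le_of_not_ge hab)).symm
  rw [uIcc_of_le hab] at hx
  rw [uIoo_of_le hab, mem_Ioo, not_and_or, not_lt, not_lt] at hp
  refine hp.imp (fun hpa => ?_) fun hbp => ?_
  · rw [abs_of_nonneg (by linarith [hx.1]), abs_of_nonneg (by linarith [hx.1])]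
    linarith
  · rw [abs_of_nonpos (by linarith [hx.2]), abs_of_nonpos (by linarith [hx.2])]
    linarith

end RealFunctions

section ImageOfInterval

variable {α δ : Type*} [ConditionallyCompleteLinearOrder α] [TopologicalSpace α] [OrderTopology α]
  [DenselyOrdered α] [LinearOrder δ] [TopologicalSpace δ] [OrderClosedTopology δ] {f : α → δ}
  {a b : α}

theorem image_Icc_subset_uIcc_of_injOn (hab : a ≤ b) (hf : ContinuousOn f (Icc a b))
    (hinj : InjOn f (Icc a b)) : f '' Icc a b ⊆ uIcc (f a) (f b) := by
  rcases hf.strictMonoOn_of_injOn_Icc' hab hinj with hmono | hanti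
  · exact hmono.monotoneOn.image_Icc_subset.trans Icc_subset_uIcc
  · exact hanti.antitoneOn.image_Icc_subset.trans Icc_subset_uIcc'

theorem image_Ioo_eq_uIoo_of_injOn (hab : a ≤ b) (hf : ContinuousOn f (Icc a b))
    (hinj : InjOn f (Icc a b)) : f '' Ioo a b = uIoo (f a) (f b) := by
  have ha := left_mem_Icc.2 hab
  have hb := right_mem_Icc.2 hab
  rcases hf.strictMonoOn_of_injOn_Icc' hab hinj with hmono | hanti
  · rw [uIoo_of_le (hmono.monotoneOn ha hb hab)]
    refine (intermediate_value_Ioo hab hf).antisymm' ?_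
    rintro _ ⟨x, hx, rfl⟩
    exact ⟨hmono ha (Ioo_subset_Icc_self hx) hx.1, hmono (Ioo_subset_Icc_self hx) hb hx.2⟩
  · rw [uIoo_of_ge (hanti.antitoneOn ha hb hab)]
    refine (intermediate_value_Ioo' hab hf).antisymm' ?_
    rintro _ ⟨x, hx, rfl⟩
    exact ⟨hanti (Ioo_subset_Icc_self hx) hb hx.2, hanti ha (Ioo_subset_Icc_self hx) hx.1⟩

end ImageOfInterval

/-- The integrand `d(x, S ∪ Uᶜ)^r`, `U = (0,1)`, of the auxiliary quantization error. -/
def boundaryCost (S : Set ℝ) (r x : ℝ) : ℝ :=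
  infDist x (S ∪ (Ioo (0 : ℝ) 1)ᶜ) ^ r

section BoundaryCost

variable {S : Set ℝ} {r x : ℝ} {μ : Measure ℝ} {n : ℕ}

theorem infDist_union_compl_Ioo_le_one (S : Set ℝ) (x : ℝ) :
    infDist x (S ∪ (Ioo (0 : ℝ) 1)ᶜ) ≤ 1 := by
  by_cases hx : x ∈ Ioo (0 : ℝ) 1
  · calc infDist x (S ∪ (Ioo (0 : ℝ) 1)ᶜ) ≤ dist x 0 := infDist_le_dist_of_mem (by simp)
      _ = x := by rw [Real.dist_0_eq_abs, abs_of_pos hx.1]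
      _ ≤ 1 := hx.2.le
  · rw [infDist_zero_of_mem (mem_union_right S hx)]
    exact zero_le_one

theorem boundaryCost_nonneg (S : Set ℝ) (r x : ℝ) : 0 ≤ boundaryCost S r x :=
  Real.rpow_nonneg infDist_nonneg r

theorem norm_boundaryCost_le_one (S : Set ℝ) (hr : 0 ≤ r) (x : ℝ) : ‖boundaryCost S r x‖ ≤ 1 := by
  rw [Real.norm_of_nonneg (boundaryCost_nonneg S r x)]
  exact Real.rpow_le_one infDist_nonneg (infDist_union_compl_Ioo_le_one S x) hr

theorem continuous_boundaryCost (S : Set ℝ) (hr : 0 ≤ r) : Continuous (boundaryCost S r) :=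
  (continuous_infDist_pt _).rpow_const fun _ => Or.inr hr

theorem integrable_boundaryCost [IsFiniteMeasure μ] (S : Set ℝ) (hr : 0 ≤ r) :
    Integrable (boundaryCost S r) μ :=
  .of_bound (continuous_boundaryCost S hr).aestronglyMeasurable 1
    (.of_forall (norm_boundaryCost_le_one S hr))

theorem integral_boundaryCost_empty_pos [IsFiniteMeasure μ] (hr : 0 ≤ r) (hμ : 0 < μ (Ioo 0 1)) :
    0 < ∫ x, boundaryCost ∅ r x ∂μ := by
  rw [integral_pos_iff_support_of_nonneg (boundaryCost_nonneg ∅ r) (integrable_boundaryCost _ hr)]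
  refine hμ.trans_le (measure_mono fun x hx => (Real.rpow_pos_of_pos ?_ r).ne')
  rw [empty_union]
  exact (isOpen_Ioo.isClosed_compl.notMem_iff_infDist_pos ⟨0, by simp⟩).1 (not_not.2 hx)

theorem unr_nonneg (μ : Measure ℝ) (n : ℕ) (r : ℝ) : 0 ≤ unr μ n r := by
  refine Real.sInf_nonneg ?_
  rintro _ ⟨α, -, rfl⟩
  exact integral_nonneg (boundaryCost_nonneg α r)

theorem unr_le_integral_boundaryCost {α : Finset ℝ} (hα : α.card ≤ n) :
    unr μ n r ≤ ∫ x, boundaryCost α r x ∂μ := by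
  refine csInf_le ⟨0, ?_⟩ ⟨α, hα, rfl⟩
  rintro _ ⟨β, -, rfl⟩
  exact integral_nonneg (boundaryCost_nonneg β r)

theorem exists_integral_boundaryCost_lt {δ : ℝ} (hδ : unr μ n r < δ) :
    ∃ α : Finset ℝ, α.card ≤ n ∧ ∫ x, boundaryCost α r x ∂μ < δ := by
  obtain ⟨_, ⟨α, hα, rfl⟩, hlt⟩ := exists_lt_of_csInf_lt (Set.Nonempty.image _ ⟨∅, by simp⟩) hδ
  exact ⟨α, hα, hlt⟩

theorem le_unr_of_forall_lt {a δ : ℝ} (hδ : unr μ n r < δ)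
    (ha : ∀ α : Finset ℝ, α.card ≤ n → ∫ x, boundaryCost α r x ∂μ < δ →
      a ≤ ∫ x, boundaryCost α r x ∂μ) : a ≤ unr μ n r := by
  refine le_of_forall_gt_imp_ge_of_dense fun t ht => ?_
  obtain ⟨α, hα, hlt⟩ := exists_integral_boundaryCost_lt (lt_min ht hδ)
  exact (ha α hα (hlt.trans_le (min_le_right t δ))).trans (hlt.le.trans (min_le_left t δ))

theorem tendsto_infDist_image_range_denseSeq (S : Set ℝ) (x : ℝ) :
    Tendsto (fun n : ℕ => infDist x
      (((Finset.range n).image (TopologicalSpace.denseSeq ℝ) : Finset ℝ) ∪ S : Set ℝ))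
      atTop (𝓝 0) := by
  refine tendsto_order.2 ⟨fun a ha => .of_forall fun n => ha.trans_le infDist_nonneg,
    fun ε hε => ?_⟩
  obtain ⟨k, hk⟩ := (TopologicalSpace.denseRange_denseSeq ℝ).exists_dist_lt x hε
  filter_upwards [eventually_gt_atTop k] with n hn
  refine (infDist_le_dist_of_mem (Set.mem_union_left S ?_)).trans_lt hk
  exact Finset.mem_coe.2 (Finset.mem_image_of_mem _ (Finset.mem_range.2 hn))

theorem tendsto_unr_atTop_zero [IsFiniteMeasure μ] (hr : 0 < r) :
    Tendsto (fun n => unr μ n r) atTop (𝓝 0) := by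
  let D : ℕ → Finset ℝ := fun n => (Finset.range n).image (TopologicalSpace.denseSeq ℝ)
  have hcard (n : ℕ) : (D n).card ≤ n := Finset.card_image_le.trans_eq (Finset.card_range n)
  have hcost (x : ℝ) : Tendsto (fun n => boundaryCost (D n) r x) atTop (𝓝 0) := by
    simpa only [boundaryCost, Real.zero_rpow hr.ne'] using
      (tendsto_infDist_image_range_denseSeq _ x).rpow_const (p := r) (Or.inr hr.le)
  have hint : Tendsto (fun n => ∫ x, boundaryCost (D n) r x ∂μ) atTop (𝓝 (∫ _, 0 ∂μ)) :=
    tendsto_integral_of_dominated_convergence (fun _ => 1)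
      (fun n => (continuous_boundaryCost (D n) hr.le).aestronglyMeasurable) (integrable_const 1)
      (fun n => .of_forall (norm_boundaryCost_le_one (D n) hr.le)) (.of_forall hcost)
  rw [integral_zero] at hint
  exact squeeze_zero (fun n => unr_nonneg μ n r) (fun n => unr_le_integral_boundaryCost (hcard n))
    hint

end BoundaryCost

namespace CookieCutter

variable (cc : CookieCutter)

section Constants

theorem b_pos : 0 < cc.b :=
  zero_lt_one.trans cc.hb1

theorem one_lt_b_rpow : 1 < cc.b ^ cc.γ :=
  Real.one_lt_rpow cc.hb1 cc.hγ.1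

theorem xi_pos : 0 < cc.xi :=
  Real.exp_pos _

theorem one_le_xi : 1 ≤ cc.xi :=
  Real.one_le_exp (div_nonneg cc.hc.le (sub_nonneg.2 cc.one_lt_b_rpow.le))

theorem one_le_eta {h : ℝ} (hh : 0 ≤ h) : 1 ≤ cc.eta h :=
  Real.one_le_rpow cc.one_le_xi (by positivity)

theorem eta_pos (h : ℝ) : 0 < cc.eta h :=
  Real.rpow_pos_of_pos cc.xi_pos _

end Constants

section WordMap

variable {x y : ℝ}

theorem wordMap_mem_Icc (σ : List (Fin cc.N)) (hx : x ∈ Icc (0 : ℝ) 1) :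
    cc.wordMap σ x ∈ Icc (0 : ℝ) 1 := by
  induction σ with
  | nil => exact hx
  | cons j σ ih => exact cc.hJsub_sub j (cc.hφ_maps j _ ih)

theorem wordMap_cons_mem_Jsub (j : Fin cc.N) (σ : List (Fin cc.N)) (hx : x ∈ Icc (0 : ℝ) 1) :
    cc.wordMap (j :: σ) x ∈ cc.Jsub j :=
  cc.hφ_maps j _ (cc.wordMap_mem_Icc σ hx)

theorem wordMap_append (σ τ : List (Fin cc.N)) :
    cc.wordMap (σ ++ τ) = cc.wordMap σ ∘ cc.wordMap τ := by
  induction σ with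
  | nil => rfl
  | cons j σ ih => rw [List.cons_append, wordMap, ih, wordMap, Function.comp_assoc]

theorem leftInvOn_iterate_wordMap (σ : List (Fin cc.N)) :
    LeftInvOn cc.f^[σ.length] (cc.wordMap σ) (Icc 0 1) := by
  induction σ with
  | nil => exact fun x _ => rfl
  | cons j σ ih =>
    intro x hx
    change cc.f^[σ.length] (cc.f (cc.φ j (cc.wordMap σ x))) = x
    rw [cc.hφ_rinv j _ (cc.wordMap_mem_Icc σ hx), ih hx]

theorem injOn_wordMap (σ : List (Fin cc.N)) : InjOn (cc.wordMap σ) (Icc 0 1) :=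
  (cc.leftInvOn_iterate_wordMap σ).injOn

theorem differentiableAt_wordMap (σ : List (Fin cc.N)) (hx : x ∈ Icc (0 : ℝ) 1) :
    DifferentiableAt ℝ (cc.wordMap σ) x := by
  induction σ with
  | nil => exact differentiableAt_id
  | cons j σ ih => exact (cc.hφdiff j _ (cc.wordMap_mem_Icc σ hx)).comp x ih

theorem continuousOn_wordMap (σ : List (Fin cc.N)) : ContinuousOn (cc.wordMap σ) (Icc 0 1) :=
  fun _ hx => (cc.differentiableAt_wordMap σ hx).continuousAt.continuousWithinAt

theorem b_le_abs_deriv_f (j : Fin cc.N) (hx : x ∈ cc.Jsub j) : cc.b ≤ |deriv cc.f x| :=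
  cc.hb.1 ⟨x, mem_iUnion.2 ⟨j, hx⟩, rfl⟩

theorem deriv_φ (j : Fin cc.N) (hx : x ∈ Icc (0 : ℝ) 1) :
    deriv (cc.φ j) x = (deriv cc.f (cc.φ j x))⁻¹ := by
  have hcomp : HasDerivAt (cc.f ∘ cc.φ j) (deriv cc.f (cc.φ j x) * deriv (cc.φ j) x) x :=
    (cc.hfdiff j _ (cc.hφ_maps j x hx)).hasDerivAt.comp x (cc.hφdiff j x hx).hasDerivAt
  have hid : HasDerivWithinAt (cc.f ∘ cc.φ j) 1 (Icc 0 1) x :=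
    (hasDerivWithinAt_id x _).congr (cc.hφ_rinv j) (cc.hφ_rinv j x hx)
  exact eq_inv_of_mul_eq_one_right
    ((uniqueDiffOn_Icc zero_lt_one x hx).eq_deriv _ hcomp.hasDerivWithinAt hid)

theorem abs_deriv_wordMap_cons (j : Fin cc.N) (σ : List (Fin cc.N)) (hx : x ∈ Icc (0 : ℝ) 1) :
    |deriv (cc.wordMap (j :: σ)) x| =
      |deriv cc.f (cc.wordMap (j :: σ) x)|⁻¹ * |deriv (cc.wordMap σ) x| := by
  have hσ := cc.wordMap_mem_Icc σ hx
  have hcomp := deriv_comp x (cc.hφdiff j _ hσ) (cc.differentiableAt_wordMap σ hx)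
  rw [cc.deriv_φ j hσ] at hcomp
  rw [← abs_inv, ← abs_mul]
  exact congrArg abs hcomp

theorem abs_deriv_wordMap_pos (σ : List (Fin cc.N)) (hx : x ∈ Icc (0 : ℝ) 1) :
    0 < |deriv (cc.wordMap σ) x| := by
  induction σ with
  | nil => simp [wordMap]
  | cons j σ ih =>
    rw [cc.abs_deriv_wordMap_cons j σ hx]
    have hf := cc.b_pos.trans_le (cc.b_le_abs_deriv_f j (cc.wordMap_cons_mem_Jsub j σ hx))
    positivity

theorem abs_deriv_wordMap_le (σ : List (Fin cc.N)) (hx : x ∈ Icc (0 : ℝ) 1) :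
    |deriv (cc.wordMap σ) x| ≤ cc.b⁻¹ ^ σ.length := by
  induction σ with
  | nil => simp [wordMap]
  | cons j σ ih =>
    rw [cc.abs_deriv_wordMap_cons j σ hx, List.length_cons, pow_succ']
    have hb := cc.b_pos
    gcongr
    exact cc.b_le_abs_deriv_f j (cc.wordMap_cons_mem_Jsub j σ hx)

theorem abs_wordMap_sub_le (σ : List (Fin cc.N)) (hx : x ∈ Icc (0 : ℝ) 1)
    (hy : y ∈ Icc (0 : ℝ) 1) : |cc.wordMap σ x - cc.wordMap σ y| ≤ cc.b⁻¹ ^ σ.length := by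
  have hb := cc.b_pos
  calc |cc.wordMap σ x - cc.wordMap σ y| ≤ cc.b⁻¹ ^ σ.length * |x - y| :=
        (convex_Icc (0 : ℝ) 1).norm_image_sub_le_of_norm_deriv_le
          (fun _ hz => cc.differentiableAt_wordMap σ hz)
          (fun _ hz => cc.abs_deriv_wordMap_le σ hz) hy hx
    _ ≤ cc.b⁻¹ ^ σ.length :=
        mul_le_of_le_one_right (by positivity) (Real.dist_le_of_mem_Icc_01 hx hy)

end WordMap

section Distortion

variable {x y : ℝ}

theorem abs_deriv_f_wordMap_cons_le (j : Fin cc.N) (σ : List (Fin cc.N))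
    (hx : x ∈ Icc (0 : ℝ) 1) (hy : y ∈ Icc (0 : ℝ) 1) :
    |deriv cc.f (cc.wordMap (j :: σ) x)| ≤
      Real.exp (cc.c * (cc.b ^ cc.γ)⁻¹ ^ (σ.length + 1)) *
        |deriv cc.f (cc.wordMap (j :: σ) y)| := by
  have hyJ := cc.wordMap_cons_mem_Jsub j σ hy
  refine abs_le_exp_mul_abs (cc.hb1.le.trans (cc.b_le_abs_deriv_f j hyJ)) ?_
  calc |deriv cc.f (cc.wordMap (j :: σ) x) - deriv cc.f (cc.wordMap (j :: σ) y)|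
      ≤ cc.c * |cc.wordMap (j :: σ) x - cc.wordMap (j :: σ) y| ^ cc.γ :=
        cc.hHolder j _ (cc.wordMap_cons_mem_Jsub j σ hx) _ hyJ
    _ ≤ cc.c * (cc.b⁻¹ ^ (σ.length + 1)) ^ cc.γ := by
        gcongr
        · exact cc.hc.le
        · exact cc.hγ.1.le
        · exact cc.abs_wordMap_sub_le (j :: σ) hx hy
    _ = cc.c * (cc.b ^ cc.γ)⁻¹ ^ (σ.length + 1) := by
        rw [← Real.rpow_pow_comm (inv_nonneg.2 cc.b_pos.le), Real.inv_rpow cc.b_pos.le]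

theorem abs_deriv_wordMap_le_exp_mul (σ : List (Fin cc.N)) (hx : x ∈ Icc (0 : ℝ) 1)
    (hy : y ∈ Icc (0 : ℝ) 1) :
    |deriv (cc.wordMap σ) x| ≤
      Real.exp (cc.c * ∑ k ∈ Finset.Ico 1 (σ.length + 1), (cc.b ^ cc.γ)⁻¹ ^ k) *
        |deriv (cc.wordMap σ) y| := by
  induction σ with
  | nil => simp [wordMap]
  | cons j σ ih =>
    have hfx := cc.b_pos.trans_le (cc.b_le_abs_deriv_f j (cc.wordMap_cons_mem_Jsub j σ hx))
    have hfy := cc.b_pos.trans_le (cc.b_le_abs_deriv_f j (cc.wordMap_cons_mem_Jsub j σ hy))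
    have hinv : |deriv cc.f (cc.wordMap (j :: σ) x)|⁻¹ ≤
        Real.exp (cc.c * (cc.b ^ cc.γ)⁻¹ ^ (σ.length + 1)) *
          |deriv cc.f (cc.wordMap (j :: σ) y)|⁻¹ := by
      rw [← div_eq_mul_inv, le_div_iff₀ hfy, inv_mul_le_iff₀ hfx, mul_comm]
      exact cc.abs_deriv_f_wordMap_cons_le j σ hy hx
    rw [cc.abs_deriv_wordMap_cons j σ hx, cc.abs_deriv_wordMap_cons j σ hy, List.length_cons,
      Finset.sum_Ico_succ_top le_add_self, mul_add, Real.exp_add,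
      mul_comm (Real.exp _) (Real.exp _)]
    exact (mul_le_mul hinv ih (abs_nonneg _) (by positivity)).trans_eq (mul_mul_mul_comm _ _ _ _)

theorem abs_deriv_wordMap_le_xi_mul (σ : List (Fin cc.N)) (hx : x ∈ Icc (0 : ℝ) 1)
    (hy : y ∈ Icc (0 : ℝ) 1) : |deriv (cc.wordMap σ) x| ≤ cc.xi * |deriv (cc.wordMap σ) y| := by
  set p := cc.b ^ cc.γ
  have hp1 : 1 < p := cc.one_lt_b_rpow
  have hp0 : 0 < p := one_pos.trans hp1
  have hgeom : ∑ k ∈ Finset.Ico 1 (σ.length + 1), p⁻¹ ^ k ≤ (p - 1)⁻¹ :=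
    calc ∑ k ∈ Finset.Ico 1 (σ.length + 1), p⁻¹ ^ k ≤ p⁻¹ ^ 1 / (1 - p⁻¹) :=
        geom_sum_Ico_le_of_lt_one (inv_nonneg.2 hp0.le) (inv_lt_one_of_one_lt₀ hp1)
      _ = (p - 1)⁻¹ := by
        rw [pow_one, div_eq_mul_inv, ← mul_inv, mul_sub, mul_inv_cancel₀ hp0.ne', mul_one]
  refine (cc.abs_deriv_wordMap_le_exp_mul σ hx hy).trans ?_
  rw [xi, div_eq_mul_inv]
  gcongr
  exact cc.hc.le

theorem abs_deriv_wordMap_le_φnorm (σ : List (Fin cc.N)) (hx : x ∈ Icc (0 : ℝ) 1) :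
    |deriv (cc.wordMap σ) x| ≤ cc.φnorm σ := by
  refine le_csSup ⟨cc.b⁻¹ ^ σ.length, ?_⟩ ⟨x, hx, rfl⟩
  rintro _ ⟨y, hy, rfl⟩
  exact cc.abs_deriv_wordMap_le σ hy

theorem φnorm_pos (σ : List (Fin cc.N)) : 0 < cc.φnorm σ :=
  (cc.abs_deriv_wordMap_pos σ (left_mem_Icc.2 zero_le_one)).trans_le
    (cc.abs_deriv_wordMap_le_φnorm σ (left_mem_Icc.2 zero_le_one))

theorem inv_xi_mul_φnorm_le (σ : List (Fin cc.N)) (hx : x ∈ Icc (0 : ℝ) 1) :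
    cc.xi⁻¹ * cc.φnorm σ ≤ |deriv (cc.wordMap σ) x| := by
  rw [inv_mul_le_iff₀ cc.xi_pos]
  refine csSup_le ((nonempty_Icc.2 zero_le_one).image _) ?_
  rintro _ ⟨y, hy, rfl⟩
  exact cc.abs_deriv_wordMap_le_xi_mul σ hy hx

theorem inv_xi_mul_φnorm_mul_abs_sub_le (σ : List (Fin cc.N)) (hx : x ∈ Icc (0 : ℝ) 1)
    (hy : y ∈ Icc (0 : ℝ) 1) :
    cc.xi⁻¹ * cc.φnorm σ * |x - y| ≤ |cc.wordMap σ x - cc.wordMap σ y| :=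
  mul_abs_sub_le_abs_image_sub ordConnected_Icc (fun _ hz => cc.differentiableAt_wordMap σ hz)
    (fun _ hz => cc.inv_xi_mul_φnorm_le σ hz) hx hy

end Distortion

section BasicInterval

variable {x y : ℝ}

theorem isCompact_Jc (σ : List (Fin cc.N)) : IsCompact (cc.Jc σ) :=
  isCompact_Icc.image_of_continuousOn (cc.continuousOn_wordMap σ)

theorem measurableSet_Jc (σ : List (Fin cc.N)) : MeasurableSet (cc.Jc σ) :=
  (cc.isCompact_Jc σ).measurableSet

theorem Jc_subset_Icc (σ : List (Fin cc.N)) : cc.Jc σ ⊆ Icc 0 1 :=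
  image_subset_iff.2 fun _ => cc.wordMap_mem_Icc σ

theorem Jc_nil : cc.Jc [] = Icc 0 1 :=
  image_id _

theorem Jc_append (σ τ : List (Fin cc.N)) : cc.Jc (σ ++ τ) = cc.wordMap σ '' cc.Jc τ := by
  rw [Jc, wordMap_append, image_comp, Jc]

theorem Jc_subset_of_prefix {σ τ : List (Fin cc.N)} (h : σ <+: τ) : cc.Jc τ ⊆ cc.Jc σ := by
  obtain ⟨ρ, rfl⟩ := h
  rw [Jc_append]
  exact image_mono (cc.Jc_subset_Icc ρ)

theorem preimage_iterate_inter_Jc (σ τ : List (Fin cc.N)) :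
    cc.f^[σ.length] ⁻¹' cc.Jc τ ∩ cc.Jc σ = cc.Jc (σ ++ τ) :=
  calc cc.f^[σ.length] ⁻¹' cc.Jc τ ∩ cc.Jc σ = cc.wordMap σ '' (cc.Jc τ ∩ Icc 0 1) :=
        (cc.leftInvOn_iterate_wordMap σ).image_inter'.symm
    _ = cc.Jc (σ ++ τ) := by rw [inter_eq_left.2 (cc.Jc_subset_Icc τ), Jc_append]

theorem continuousOn_iterate (σ : List (Fin cc.N)) : ContinuousOn cc.f^[σ.length] (cc.Jc σ) := by
  induction σ with
  | nil => exact continuousOn_id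
  | cons j σ ih =>
    rw [List.length_cons, Function.iterate_succ]
    refine ih.comp ?_ ?_ <;> rintro _ ⟨x, hx, rfl⟩
    · exact (cc.hfdiff j _ (cc.wordMap_cons_mem_Jsub j σ hx)).continuousAt.continuousWithinAt
    · exact ⟨x, hx, (cc.hφ_rinv j _ (cc.wordMap_mem_Icc σ hx)).symm⟩

theorem wordMap_image_Ioo (σ : List (Fin cc.N)) :
    cc.wordMap σ '' Ioo 0 1 = uIoo (cc.wordMap σ 0) (cc.wordMap σ 1) :=
  image_Ioo_eq_uIoo_of_injOn zero_le_one (cc.continuousOn_wordMap σ) (cc.injOn_wordMap σ)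

theorem wordMap_image_Ioo_subset (σ : List (Fin cc.N)) :
    cc.wordMap σ '' Ioo 0 1 ⊆ Ioo 0 1 := by
  have h0 := cc.wordMap_mem_Icc σ (left_mem_Icc.2 zero_le_one)
  have h1 := cc.wordMap_mem_Icc σ (right_mem_Icc.2 zero_le_one)
  rw [wordMap_image_Ioo]
  exact Ioo_subset_Ioo (le_inf h0.1 h1.1) (sup_le h0.2 h1.2)

theorem diamJ_nil : cc.diamJ [] = 1 := by
  rw [diamJ, Jc_nil, Real.diam_Icc zero_le_one, sub_zero]

theorem dist_le_diamJ (σ : List (Fin cc.N)) (hx : x ∈ cc.Jc σ) (hy : y ∈ cc.Jc σ) :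
    dist x y ≤ cc.diamJ σ :=
  dist_le_diam_of_mem (cc.isCompact_Jc σ).isBounded hx hy

theorem diamJ_le_pow (σ : List (Fin cc.N)) : cc.diamJ σ ≤ cc.b⁻¹ ^ σ.length := by
  refine diam_le_of_forall_dist_le (pow_nonneg (inv_nonneg.2 cc.b_pos.le) _) ?_
  rintro _ ⟨x, hx, rfl⟩ _ ⟨y, hy, rfl⟩
  exact cc.abs_wordMap_sub_le σ hx hy

theorem diamJ_le_φnorm (σ : List (Fin cc.N)) : cc.diamJ σ ≤ cc.φnorm σ := by
  refine diam_le_of_forall_dist_le (cc.φnorm_pos σ).le ?_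
  rintro _ ⟨x, hx, rfl⟩ _ ⟨y, hy, rfl⟩
  calc |cc.wordMap σ x - cc.wordMap σ y| ≤ cc.φnorm σ * |x - y| :=
        (convex_Icc (0 : ℝ) 1).norm_image_sub_le_of_norm_deriv_le
          (fun _ hz => cc.differentiableAt_wordMap σ hz)
          (fun _ hz => cc.abs_deriv_wordMap_le_φnorm σ hz) hy hx
    _ ≤ cc.φnorm σ :=
        mul_le_of_le_one_right (cc.φnorm_pos σ).le (Real.dist_le_of_mem_Icc_01 hx hy)

theorem inv_xi_mul_φnorm_mul_diamJ_le (σ τ : List (Fin cc.N)) :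
    cc.xi⁻¹ * cc.φnorm σ * cc.diamJ τ ≤ cc.diamJ (σ ++ τ) := by
  have hk : 0 < cc.xi⁻¹ * cc.φnorm σ := mul_pos (inv_pos.2 cc.xi_pos) (cc.φnorm_pos σ)
  rw [← le_div_iff₀' hk]
  refine diam_le_of_forall_dist_le (div_nonneg diam_nonneg hk.le) fun x hx y hy => ?_
  rw [le_div_iff₀' hk]
  refine (cc.inv_xi_mul_φnorm_mul_abs_sub_le σ (cc.Jc_subset_Icc τ hx)
    (cc.Jc_subset_Icc τ hy)).trans (cc.dist_le_diamJ _ ?_ ?_) <;>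
  · rw [Jc_append]
    exact mem_image_of_mem _ ‹_›

theorem diamJ_pos (σ : List (Fin cc.N)) : 0 < cc.diamJ σ := by
  have hle := cc.inv_xi_mul_φnorm_mul_diamJ_le σ []
  rw [diamJ_nil, mul_one, List.append_nil] at hle
  exact (mul_pos (inv_pos.2 cc.xi_pos) (cc.φnorm_pos σ)).trans_le hle

theorem diamJ_mul_diamJ_le (σ τ : List (Fin cc.N)) :
    cc.diamJ σ * cc.diamJ τ ≤ cc.xi * cc.diamJ (σ ++ τ) := by
  rw [← inv_mul_le_iff₀ cc.xi_pos, ← mul_assoc]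
  refine le_trans ?_ (cc.inv_xi_mul_φnorm_mul_diamJ_le σ τ)
  have hξ := cc.xi_pos
  gcongr
  · exact diam_nonneg
  · exact cc.diamJ_le_φnorm σ

theorem prefix_or_prefix_of_mem_Jc {σ τ : List (Fin cc.N)} (hσ : x ∈ cc.Jc σ)
    (hτ : x ∈ cc.Jc τ) : σ <+: τ ∨ τ <+: σ := by
  induction σ generalizing τ x with
  | nil => exact Or.inl List.nil_prefix
  | cons i σ ih =>
    cases τ with
    | nil => exact Or.inr List.nil_prefix
    | cons j τ =>
      obtain ⟨y, hy, rfl⟩ := hσ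
      obtain ⟨z, hz, hzy⟩ := hτ
      obtain rfl : i = j := by
        by_contra hij
        exact disjoint_left.1 (cc.hJsub_disj i j hij) (cc.wordMap_cons_mem_Jsub i σ hy)
          (hzy ▸ cc.wordMap_cons_mem_Jsub j τ hz)
      have hzy' : cc.wordMap τ z = cc.wordMap σ y := by
        rw [← cc.hφ_rinv i _ (cc.wordMap_mem_Icc τ hz), ← cc.hφ_rinv i _ (cc.wordMap_mem_Icc σ hy)]
        exact congrArg cc.f hzy
      simp only [List.cons_prefix_cons, true_and]
      exact ih ⟨y, hy, rfl⟩ ⟨z, hz, hzy'⟩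

variable {cc} in
theorem pairwiseDisjoint_Jc {W : Set (List (Fin cc.N))} (hW : IsAntichain (· <+: ·) W) :
    W.PairwiseDisjoint cc.Jc := fun _ hσ _ hτ hne =>
  disjoint_left.2 fun _ hxσ hxτ => (cc.prefix_or_prefix_of_mem_Jc hxσ hxτ).elim
    (hW hσ hτ hne) (hW hτ hσ hne.symm)

variable {cc} in
theorem eq_of_length_eq_of_mem_Jc {σ τ : List (Fin cc.N)} (hlen : σ.length = τ.length)
    (hσ : x ∈ cc.Jc σ) (hτ : x ∈ cc.Jc τ) : σ = τ :=
  (cc.prefix_or_prefix_of_mem_Jc hσ hτ).elim (·.eq_of_length hlen)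
    fun h => (h.eq_of_length hlen.symm).symm

variable {cc} in
theorem IsFMA.isAntichain {Γ : Finset (List (Fin cc.N))} (hΓ : cc.IsFMA Γ) :
    IsAntichain (· <+: ·) (Γ : Set (List (Fin cc.N))) :=
  fun σ hσ τ hτ hne hpre => hne (hΓ.2.2 σ hσ τ hτ hpre)

theorem exists_Jc_subset_Ioo : ∃ τ : List (Fin cc.N), cc.Jc τ ⊆ Ioo 0 1 := by
  by_contra! hend
  have hmem (τ : List (Fin cc.N)) : 0 ∈ cc.Jc τ ∨ 1 ∈ cc.Jc τ := by
    obtain ⟨x, hx, hxU⟩ := not_subset.1 (hend τ)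
    rcases eq_endpoints_or_mem_Ioo_of_mem_Icc (cc.Jc_subset_Icc τ hx) with rfl | rfl | hx'
    exacts [Or.inl hx, Or.inr hx, absurd hx' hxU]
  have hinj : Function.Injective fun τ : Fin 2 → Fin cc.N => (0 : ℝ) ∈ cc.Jc (List.ofFn τ) := by
    intro τ τ' hiff
    refine List.ofFn_injective ?_
    by_cases h0 : (0 : ℝ) ∈ cc.Jc (List.ofFn τ)
    · exact eq_of_length_eq_of_mem_Jc (by simp) h0 (hiff.mp h0)
    · exact eq_of_length_eq_of_mem_Jc (by simp) ((hmem _).resolve_left h0)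
        ((hmem _).resolve_left fun h0' => h0 (hiff.mpr h0'))
  have hcard : cc.N ^ 2 ≤ 2 := by
    simpa using Fintype.card_le_of_injective _ hinj
  nlinarith [cc.hN]

theorem exists_Jc_subset_of_isOpen {U : Set ℝ} (hU : IsOpen U) (hx : x ∈ U ∩ cc.E) :
    ∃ σ, x ∈ cc.Jc σ ∧ cc.Jc σ ⊆ U := by
  obtain ⟨δ, hδ, hball⟩ := Metric.isOpen_iff.1 hU x hx.1
  obtain ⟨n, hn⟩ := exists_pow_lt_of_lt_one hδ (inv_lt_one_of_one_lt₀ cc.hb1)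
  obtain ⟨τ, hτ⟩ := mem_iUnion.1 (mem_iInter₂.1 hx.2 (n + 1) le_add_self)
  refine ⟨_, hτ, fun y hy => hball ?_⟩
  calc dist y x ≤ cc.diamJ (List.ofFn τ) := cc.dist_le_diamJ _ hy hτ
    _ ≤ cc.b⁻¹ ^ (n + 1) := by simpa using cc.diamJ_le_pow (List.ofFn τ)
    _ ≤ cc.b⁻¹ ^ n := pow_le_pow_of_le_one (inv_nonneg.2 cc.b_pos.le)
        (inv_le_one_of_one_le₀ cc.hb1.le) n.le_succ
    _ < δ := hn

theorem exists_antichain_cover {U : Set ℝ} (hU : IsOpen U) :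
    ∃ W : Set (List (Fin cc.N)), IsAntichain (· <+: ·) W ∧
      (⋃ σ ∈ W, cc.Jc σ) ⊆ U ∧ U ∩ cc.E ⊆ ⋃ σ ∈ W, cc.Jc σ := by
  refine ⟨{σ | cc.Jc σ ⊆ U ∧ ∀ ρ, ρ <+: σ → cc.Jc ρ ⊆ U → ρ = σ},
    fun σ hσ τ hτ hne hpre => hne (hτ.2 σ hpre hσ.1), iUnion₂_subset fun σ hσ => hσ.1,
    fun x hx => ?_⟩
  obtain ⟨σ, ⟨hxσ, hσU⟩, hmin⟩ := exists_minimalFor_of_wellFoundedLT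
    (fun σ => x ∈ cc.Jc σ ∧ cc.Jc σ ⊆ U) List.length (cc.exists_Jc_subset_of_isOpen hU hx)
  refine mem_iUnion₂.2 ⟨σ, ⟨hσU, fun ρ hρ hρU => hρ.eq_of_length_le ?_⟩, hxσ⟩
  exact hmin ⟨cc.Jc_subset_of_prefix hρ hxσ, hρU⟩ hρ.length_le

end BasicInterval

section Supermultiplicative

/-- A Borel measure supported on `E` and charging every basic interval, with
`μ(J_σ) μ(J_τ) ≤ C μ(J_{στ})`; this is the only property of Gibbs-like measures behind the lower
bound for `u_{n,r}`. The empty word is included, with `J_∅ = [0,1]`. -/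
structure IsSupermultiplicative (μ : Measure ℝ) (C : ℝ) : Prop where
  measure_compl_E : μ cc.Eᶜ = 0
  real_Jc_pos : ∀ σ, 0 < μ.real (cc.Jc σ)
  real_Jc_mul_le : ∀ σ τ, μ.real (cc.Jc σ) * μ.real (cc.Jc τ) ≤ C * μ.real (cc.Jc (σ ++ τ))

theorem E_subset_Icc : cc.E ⊆ Icc 0 1 :=
  (biInter_subset_of_mem le_rfl).trans (iUnion_subset fun _ => cc.Jc_subset_Icc _)

theorem aemeasurable_iterate (μ : Measure ℝ) (σ : List (Fin cc.N)) :
    AEMeasurable cc.f^[σ.length] (μ.restrict (cc.Jc σ)) :=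
  (cc.continuousOn_iterate σ).aemeasurable (cc.measurableSet_Jc σ)

theorem le_of_forall_Jc_le {ν₁ ν₂ : Measure ℝ} [ν₂.OuterRegular] (hE : ν₁ cc.Eᶜ = 0)
    (hle : ∀ σ, ν₁ (cc.Jc σ) ≤ ν₂ (cc.Jc σ)) : ν₁ ≤ ν₂ := by
  refine Measure.le_intro fun A _ _ => ?_
  rw [A.measure_eq_iInf_isOpen ν₂]
  refine le_iInf₂ fun U hAU => le_iInf fun hU => ?_
  obtain ⟨W, hW, hWU, hUW⟩ := cc.exists_antichain_cover hU
  have hdisj : W.PairwiseDisjoint cc.Jc := pairwiseDisjoint_Jc hW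
  have hmeas : ∀ σ ∈ W, MeasurableSet (cc.Jc σ) := fun σ _ => cc.measurableSet_Jc σ
  calc ν₁ A ≤ ν₁ (U ∩ cc.E) := (measure_mono hAU).trans_eq (measure_inter_conull hE).symm
    _ ≤ ν₁ (⋃ σ ∈ W, cc.Jc σ) := measure_mono hUW
    _ = ∑' σ : W, ν₁ (cc.Jc σ) := measure_biUnion W.to_countable hdisj hmeas
    _ ≤ ∑' σ : W, ν₂ (cc.Jc σ) := ENNReal.tsum_le_tsum fun σ => hle σ
    _ = ν₂ (⋃ σ ∈ W, cc.Jc σ) := (measure_biUnion W.to_countable hdisj hmeas).symm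
    _ ≤ ν₂ U := measure_mono hWU

namespace IsSupermultiplicative

variable {cc} {μ : Measure ℝ} {C r : ℝ}

theorem const_pos (hμ : cc.IsSupermultiplicative μ C) : 0 < C := by
  have hpos := hμ.real_Jc_pos []
  exact pos_of_mul_pos_left ((mul_pos hpos hpos).trans_le (hμ.real_Jc_mul_le [] [])) hpos.le

theorem measure_Ioo_pos (hμ : cc.IsSupermultiplicative μ C) : 0 < μ (Ioo 0 1) := by
  obtain ⟨τ, hτ⟩ := cc.exists_Jc_subset_Ioo
  exact (ENNReal.toReal_pos_iff.1 (hμ.real_Jc_pos τ)).1.trans_le (measure_mono hτ)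

theorem isFiniteMeasure (hμ : cc.IsSupermultiplicative μ C) : IsFiniteMeasure μ := by
  refine ⟨?_⟩
  calc μ univ ≤ μ (cc.Jc [] ∪ cc.Eᶜ) := measure_mono fun x _ =>
        (em (x ∈ cc.E)).imp_left fun hx => cc.Jc_nil ▸ cc.E_subset_Icc hx
    _ ≤ μ (cc.Jc []) + μ cc.Eᶜ := measure_union_le _ _
    _ = μ (cc.Jc []) := by rw [hμ.measure_compl_E, add_zero]
    _ < ⊤ := (ENNReal.toReal_pos_iff.1 (hμ.real_Jc_pos [])).2

theorem smul_le_smul_map (hμ : cc.IsSupermultiplicative μ C) (σ : List (Fin cc.N)) :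
    μ (cc.Jc σ) • μ ≤
      ENNReal.ofReal C • (μ.restrict (cc.Jc σ)).map cc.f^[σ.length] := by
  have := hμ.isFiniteMeasure
  have := Measure.OuterRegular.smul ((μ.restrict (cc.Jc σ)).map cc.f^[σ.length])
    (ENNReal.ofReal_ne_top (r := C))
  refine cc.le_of_forall_Jc_le (by simp [hμ.measure_compl_E]) fun τ => ?_
  rw [Measure.smul_apply, Measure.smul_apply,
    Measure.map_apply_of_aemeasurable (cc.aemeasurable_iterate μ σ) (cc.measurableSet_Jc τ),
    Measure.restrict_apply' (cc.measurableSet_Jc σ), cc.preimage_iterate_inter_Jc, smul_eq_mul,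
    smul_eq_mul]
  have hle := ENNReal.ofReal_le_ofReal (hμ.real_Jc_mul_le σ τ)
  rwa [ENNReal.ofReal_mul measureReal_nonneg, ENNReal.ofReal_mul hμ.const_pos.le,
    ofReal_measureReal, ofReal_measureReal, ofReal_measureReal] at hle

theorem real_Jc_mul_integral_le (hμ : cc.IsSupermultiplicative μ C) (σ : List (Fin cc.N))
    {g : ℝ → ℝ} (hg0 : 0 ≤ g)
    (hg : Integrable g ((μ.restrict (cc.Jc σ)).map cc.f^[σ.length])) :
    μ.real (cc.Jc σ) * ∫ x, g x ∂μ ≤ C * ∫ x in cc.Jc σ, g (cc.f^[σ.length] x) ∂μ :=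
  calc μ.real (cc.Jc σ) * ∫ x, g x ∂μ = ∫ x, g x ∂(μ (cc.Jc σ) • μ) :=
        (integral_smul_measure g _).symm
    _ ≤ ∫ x, g x ∂(ENNReal.ofReal C • (μ.restrict (cc.Jc σ)).map cc.f^[σ.length]) :=
        integral_mono_measure (hμ.smul_le_smul_map σ) (.of_forall hg0)
          (hg.smul_measure ENNReal.ofReal_ne_top)
    _ = C * ∫ x in cc.Jc σ, g (cc.f^[σ.length] x) ∂μ := by
        rw [integral_smul_measure,
          integral_map (cc.aemeasurable_iterate μ σ) hg.aestronglyMeasurable,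
          ENNReal.toReal_ofReal hμ.const_pos.le, smul_eq_mul]

end IsSupermultiplicative

end Supermultiplicative

section Pullback

variable {cc} {μ : Measure ℝ} {C r x : ℝ} {Γ : Finset (List (Fin cc.N))}

open Classical in
variable (cc) in
/-- The image `f^n (α ∩ J_σ)`, `n = |σ|`: the points that `α` contributes to the approximation of
the copy of the measure carried by `J_σ`. -/
def pullback (σ : List (Fin cc.N)) (α : Finset ℝ) : Finset ℝ :=
  {p ∈ α | p ∈ cc.Jc σ}.image cc.f^[σ.length]

theorem sum_card_pullback_le (hΓ : IsAntichain (· <+: ·) (Γ : Set (List (Fin cc.N))))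
    (α : Finset ℝ) : ∑ σ ∈ Γ, (cc.pullback σ α).card ≤ α.card := by
  classical
  let piece (σ : List (Fin cc.N)) : Finset ℝ := {p ∈ α | p ∈ cc.Jc σ}
  have hdisj : (Γ : Set (List (Fin cc.N))).PairwiseDisjoint piece := fun σ hσ τ hτ hne =>
    Finset.disjoint_filter.2 fun _ _ hpσ hpτ =>
      (pairwiseDisjoint_Jc hΓ hσ hτ hne).le_bot ⟨hpσ, hpτ⟩
  calc ∑ σ ∈ Γ, (cc.pullback σ α).card ≤ ∑ σ ∈ Γ, (piece σ).card :=
        Finset.sum_le_sum fun σ _ => Finset.card_image_le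
    _ = (Γ.biUnion piece).card := (Finset.card_biUnion hdisj).symm
    _ ≤ α.card := Finset.card_le_card (Finset.biUnion_subset.2 fun σ _ => Finset.filter_subset _ α)

theorem finite_image_sum_card_pullback (hΓ : IsAntichain (· <+: ·) (Γ : Set (List (Fin cc.N))))
    (F : List (Fin cc.N) → ℕ → ℝ) (n : ℕ) :
    ((fun α : Finset ℝ => ∑ σ ∈ Γ, F σ (cc.pullback σ α).card) '' {α | α.card ≤ n}).Finite := by
  refine ((finite_Icc (0 : Γ → ℕ) fun _ => n).image fun k => ∑ σ : Γ, F σ (k σ)).subset ?_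
  rintro _ ⟨α, hα, rfl⟩
  refine ⟨fun σ => (cc.pullback σ α).card, ⟨fun σ => Nat.zero_le _, fun σ => ?_⟩,
    Finset.sum_coe_sort Γ fun σ => F σ (cc.pullback σ α).card⟩
  calc (cc.pullback σ α).card ≤ ∑ τ ∈ Γ, (cc.pullback τ α).card :=
        Finset.single_le_sum_of_canonicallyOrdered (f := fun τ => (cc.pullback τ α).card) σ.2
    _ ≤ n := (sum_card_pullback_le hΓ α).trans hα

theorem mem_pullback_of_wordMap_mem {σ : List (Fin cc.N)} {α : Finset ℝ}
    (hx : x ∈ Icc (0 : ℝ) 1) (hα : cc.wordMap σ x ∈ α) : x ∈ cc.pullback σ α := by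
  classical
  exact Finset.mem_image.2 ⟨_, Finset.mem_filter.2 ⟨hα, mem_image_of_mem _ hx⟩,
    cc.leftInvOn_iterate_wordMap σ hx⟩

theorem exists_abs_wordMap_sub_le (σ : List (Fin cc.N)) (α : Finset ℝ) {p : ℝ}
    (hp : p ∈ (α : Set ℝ) ∪ (Ioo 0 1)ᶜ) (hx : x ∈ Icc (0 : ℝ) 1) :
    ∃ q ∈ Icc (0 : ℝ) 1, q ∈ (cc.pullback σ α : Set ℝ) ∪ (Ioo 0 1)ᶜ ∧
      |cc.wordMap σ x - cc.wordMap σ q| ≤ |cc.wordMap σ x - p| := by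
  by_cases hpσ : p ∈ cc.wordMap σ '' Ioo 0 1
  · obtain ⟨q, hq, rfl⟩ := hpσ
    have hα := hp.resolve_right fun hU => hU (cc.wordMap_image_Ioo_subset σ ⟨q, hq, rfl⟩)
    have hqI := Ioo_subset_Icc_self hq
    exact ⟨q, hqI, Or.inl (mem_pullback_of_wordMap_mem hqI hα), le_rfl⟩
  · rw [wordMap_image_Ioo] at hpσ
    have hxσ := image_Icc_subset_uIcc_of_injOn zero_le_one (cc.continuousOn_wordMap σ)
      (cc.injOn_wordMap σ) (mem_image_of_mem _ hx)
    rcases abs_sub_left_le_or_abs_sub_right_le hxσ hpσ with hle | hle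
    · exact ⟨0, left_mem_Icc.2 zero_le_one, Or.inr (by simp), hle⟩
    · exact ⟨1, right_mem_Icc.2 zero_le_one, Or.inr (by simp), hle⟩

theorem mul_infDist_pullback_le (σ : List (Fin cc.N)) (α : Finset ℝ) (hx : x ∈ cc.Jc σ) :
    cc.xi⁻¹ * cc.φnorm σ *
        infDist (cc.f^[σ.length] x) ((cc.pullback σ α : Set ℝ) ∪ (Ioo 0 1)ᶜ) ≤
      infDist x ((α : Set ℝ) ∪ (Ioo 0 1)ᶜ) := by
  obtain ⟨y, hy, rfl⟩ := hx
  rw [cc.leftInvOn_iterate_wordMap σ hy]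
  refine (le_infDist ⟨0, mem_union_right _ (by simp)⟩).2 fun p hp => ?_
  obtain ⟨q, hqI, hq, hle⟩ := exists_abs_wordMap_sub_le σ α hp hy
  have hk := mul_pos (inv_pos.2 cc.xi_pos) (cc.φnorm_pos σ)
  calc _ ≤ cc.xi⁻¹ * cc.φnorm σ * |y - q| :=
        mul_le_mul_of_nonneg_left (infDist_le_dist_of_mem hq) hk.le
    _ ≤ |cc.wordMap σ y - cc.wordMap σ q| := cc.inv_xi_mul_φnorm_mul_abs_sub_le σ hy hqI
    _ ≤ dist (cc.wordMap σ y) p := hle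

theorem mul_boundaryCost_pullback_le (hr : 0 ≤ r) (σ : List (Fin cc.N)) (α : Finset ℝ)
    (hx : x ∈ cc.Jc σ) :
    (cc.xi⁻¹ * cc.φnorm σ) ^ r * boundaryCost (cc.pullback σ α) r (cc.f^[σ.length] x) ≤
      boundaryCost α r x := by
  have hk := mul_pos (inv_pos.2 cc.xi_pos) (cc.φnorm_pos σ)
  rw [boundaryCost, ← Real.mul_rpow hk.le infDist_nonneg]
  exact Real.rpow_le_rpow (mul_nonneg hk.le infDist_nonneg) (mul_infDist_pullback_le σ α hx) hr

namespace IsSupermultiplicative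

theorem mul_integral_pullback_le (hμ : cc.IsSupermultiplicative μ C) (hr : 0 ≤ r)
    (σ : List (Fin cc.N)) (α : Finset ℝ) :
    (C * cc.xi ^ r)⁻¹ *
        (μ.real (cc.Jc σ) * cc.φnorm σ ^ r * ∫ x, boundaryCost (cc.pullback σ α) r x ∂μ) ≤
      ∫ x in cc.Jc σ, boundaryCost α r x ∂μ := by
  have := hμ.isFiniteMeasure
  set cost := boundaryCost (cc.pullback σ α) r
  have hint := integrable_boundaryCost (μ := (μ.restrict (cc.Jc σ)).map cc.f^[σ.length])
    (cc.pullback σ α) hr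
  have hξ := cc.xi_pos
  have hφ := cc.φnorm_pos σ
  calc (C * cc.xi ^ r)⁻¹ * (μ.real (cc.Jc σ) * cc.φnorm σ ^ r * ∫ x, cost x ∂μ)
      = (cc.xi⁻¹ * cc.φnorm σ) ^ r * (C⁻¹ * (μ.real (cc.Jc σ) * ∫ x, cost x ∂μ)) := by
        rw [Real.mul_rpow (inv_nonneg.2 hξ.le) hφ.le, Real.inv_rpow hξ.le, mul_inv]
        ring
    _ ≤ (cc.xi⁻¹ * cc.φnorm σ) ^ r * ∫ x in cc.Jc σ, cost (cc.f^[σ.length] x) ∂μ := by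
        gcongr
        rw [inv_mul_le_iff₀ hμ.const_pos]
        exact hμ.real_Jc_mul_integral_le σ (boundaryCost_nonneg _ r) hint
    _ = ∫ x in cc.Jc σ, (cc.xi⁻¹ * cc.φnorm σ) ^ r * cost (cc.f^[σ.length] x) ∂μ :=
        (integral_const_mul _ _).symm
    _ ≤ ∫ x in cc.Jc σ, boundaryCost α r x ∂μ :=
        setIntegral_mono_on ((hint.comp_aemeasurable (cc.aemeasurable_iterate μ σ)).const_mul _)
          (integrable_boundaryCost _ hr) (cc.measurableSet_Jc σ)
          fun x hx => mul_boundaryCost_pullback_le hr σ α hx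

theorem sum_mul_integral_pullback_le (hμ : cc.IsSupermultiplicative μ C) (hr : 0 ≤ r)
    (hΓ : IsAntichain (· <+: ·) (Γ : Set (List (Fin cc.N)))) (α : Finset ℝ) :
    (C * cc.xi ^ r)⁻¹ * ∑ σ ∈ Γ,
        μ.real (cc.Jc σ) * cc.φnorm σ ^ r * ∫ x, boundaryCost (cc.pullback σ α) r x ∂μ ≤
      ∫ x, boundaryCost α r x ∂μ := by
  have := hμ.isFiniteMeasure
  have hint := integrable_boundaryCost (μ := μ) α hr
  rw [Finset.mul_sum]
  calc _ ≤ ∑ σ ∈ Γ, ∫ x in cc.Jc σ, boundaryCost α r x ∂μ :=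
        Finset.sum_le_sum fun σ _ => hμ.mul_integral_pullback_le hr σ α
    _ = ∫ x in ⋃ σ ∈ Γ, cc.Jc σ, boundaryCost α r x ∂μ :=
        (integral_biUnion_finset Γ (fun σ _ => cc.measurableSet_Jc σ)
          (pairwiseDisjoint_Jc hΓ) fun _ _ => hint.integrableOn).symm
    _ ≤ ∫ x, boundaryCost α r x ∂μ :=
        setIntegral_le_integral hint (.of_forall (boundaryCost_nonneg α r))

theorem sum_mul_unr_card_pullback_le (hμ : cc.IsSupermultiplicative μ C) (hr : 0 ≤ r)
    (hΓ : IsAntichain (· <+: ·) (Γ : Set (List (Fin cc.N)))) (α : Finset ℝ) :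
    (C * cc.xi ^ r)⁻¹ * ∑ σ ∈ Γ,
        μ.real (cc.Jc σ) * cc.φnorm σ ^ r * unr μ (cc.pullback σ α).card r ≤
      ∫ x, boundaryCost α r x ∂μ := by
  refine le_trans ?_ (hμ.sum_mul_integral_pullback_le hr hΓ α)
  have hC := hμ.const_pos
  have hξ := cc.xi_pos
  gcongr with σ
  · exact mul_nonneg measureReal_nonneg (Real.rpow_nonneg (cc.φnorm_pos σ).le r)
  · exact unr_le_integral_boundaryCost le_rfl

theorem exists_pos_forall_pullback_nonempty (hμ : cc.IsSupermultiplicative μ C) (hr : 0 ≤ r)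
    (Γ : Finset (List (Fin cc.N))) :
    ∃ δ > 0, ∀ α : Finset ℝ, ∫ x, boundaryCost α r x ∂μ < δ →
      ∀ σ ∈ Γ, (cc.pullback σ α).Nonempty := by
  have := hμ.isFiniteMeasure
  set bound : List (Fin cc.N) → ℝ := fun σ => (C * cc.xi ^ r)⁻¹ *
    (μ.real (cc.Jc σ) * cc.φnorm σ ^ r * ∫ x, boundaryCost ∅ r x ∂μ)
  have hbound (σ : List (Fin cc.N)) : 0 < bound σ := by
    have hC := hμ.const_pos
    have hξ := cc.xi_pos
    have hφ := cc.φnorm_pos σ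
    have hJ := hμ.real_Jc_pos σ
    have hcost := integral_boundaryCost_empty_pos hr hμ.measure_Ioo_pos
    positivity
  have hsmall : ∀ᶠ δ in 𝓝 (0 : ℝ), ∀ σ ∈ Γ, δ < bound σ :=
    (eventually_all_finset Γ).2 fun σ _ => eventually_lt_nhds (hbound σ)
  obtain ⟨δ, hδ, hδΓ⟩ := hsmall.exists_gt
  refine ⟨δ, hδ, fun α hα σ hσ => Finset.nonempty_iff_ne_empty.2 fun hempty => ?_⟩
  have hle : bound σ ≤ ∫ x in cc.Jc σ, boundaryCost α r x ∂μ := by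
    simpa only [hempty, Finset.coe_empty] using hμ.mul_integral_pullback_le hr σ α
  have hglobal := setIntegral_le_integral (s := cc.Jc σ) (integrable_boundaryCost (μ := μ) α hr)
    (.of_forall (boundaryCost_nonneg α r))
  linarith [hδΓ σ hσ]

end IsSupermultiplicative

end Pullback

section GibbsLike

variable {cc} {μ : Measure ℝ} {h : ℝ}

theorem IsGibbsLike.bounds (hμ : cc.IsGibbsLike μ h) (hh : 0 ≤ h) (σ : List (Fin cc.N)) :
    (cc.eta h)⁻¹ * cc.diamJ σ ^ h ≤ μ.real (cc.Jc σ) ∧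
      μ.real (cc.Jc σ) ≤ cc.eta h * cc.diamJ σ ^ h := by
  have ⟨_, hE, hbounds⟩ := hμ
  rcases eq_or_ne σ [] with rfl | hσ
  · have hmass : μ.real (cc.Jc []) = 1 := by
      have hnull : μ (cc.Jc [])ᶜ = 0 :=
        measure_mono_null (compl_subset_compl.2 (cc.Jc_nil ▸ cc.E_subset_Icc)) hE
      rw [measureReal_def, (prob_compl_eq_zero_iff (cc.measurableSet_Jc [])).1 hnull,
        ENNReal.toReal_one]
    have hη := cc.one_le_eta hh
    rw [hmass, diamJ_nil, Real.one_rpow, mul_one, mul_one]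
    exact ⟨inv_le_one_of_one_le₀ hη, hη⟩
  · exact hbounds σ hσ

theorem IsGibbsLike.real_Jc_mul_le (hμ : cc.IsGibbsLike μ h) (hh : 0 ≤ h)
    (σ τ : List (Fin cc.N)) :
    μ.real (cc.Jc σ) * μ.real (cc.Jc τ) ≤ cc.Lconst h * μ.real (cc.Jc (σ ++ τ)) := by
  have hη := cc.eta_pos h
  have hξ := cc.xi_pos
  have hdiam (ρ : List (Fin cc.N)) : 0 ≤ cc.diamJ ρ := (cc.diamJ_pos ρ).le
  have hdiamh (ρ : List (Fin cc.N)) : 0 ≤ cc.diamJ ρ ^ h := Real.rpow_nonneg (hdiam ρ) h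
  have hdist : cc.diamJ σ ^ h * cc.diamJ τ ^ h ≤ cc.xi ^ h * cc.diamJ (σ ++ τ) ^ h := by
    rw [← Real.mul_rpow (hdiam σ) (hdiam τ), ← Real.mul_rpow hξ.le (hdiam _)]
    exact Real.rpow_le_rpow (mul_nonneg (hdiam σ) (hdiam τ)) (cc.diamJ_mul_diamJ_le σ τ) hh
  calc μ.real (cc.Jc σ) * μ.real (cc.Jc τ)
      ≤ (cc.eta h * cc.diamJ σ ^ h) * (cc.eta h * cc.diamJ τ ^ h) :=
        mul_le_mul (hμ.bounds hh σ).2 (hμ.bounds hh τ).2 measureReal_nonneg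
          (mul_nonneg hη.le (hdiamh σ))
    _ = cc.eta h ^ 2 * (cc.diamJ σ ^ h * cc.diamJ τ ^ h) := by ring
    _ ≤ cc.eta h ^ 2 * (cc.xi ^ h * cc.diamJ (σ ++ τ) ^ h) := by gcongr
    _ ≤ cc.eta h ^ 2 *
          (cc.xi ^ ((3 : ℝ) * h) * (cc.eta h * μ.real (cc.Jc (σ ++ τ)))) := by
        have hle := (inv_mul_le_iff₀ hη).1 (hμ.bounds hh (σ ++ τ)).1
        have hone := cc.one_le_xi
        have hexp : h ≤ 3 * h := by linarith
        have := hdiamh (σ ++ τ)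
        gcongr
    _ = cc.Lconst h * μ.real (cc.Jc (σ ++ τ)) := by rw [Lconst]; ring

theorem IsGibbsLike.isSupermultiplicative (hμ : cc.IsGibbsLike μ h) (hh : 0 ≤ h) :
    cc.IsSupermultiplicative μ (cc.Lconst h) where
  measure_compl_E := hμ.2.1
  real_Jc_pos σ := (mul_pos (inv_pos.2 (cc.eta_pos h))
    (Real.rpow_pos_of_pos (cc.diamJ_pos σ) h)).trans_le (hμ.bounds hh σ).1
  real_Jc_mul_le := hμ.real_Jc_mul_le hh

end GibbsLike

end CookieCutter

theorem unr_lower_bound_general {cc : CookieCutter} {μ : Measure ℝ} {C r : ℝ}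
    (hμ : cc.IsSupermultiplicative μ C) (hr : 0 < r) {Γ : Finset (List (Fin cc.N))}
    (hΓ : IsAntichain (· <+: ·) (Γ : Set (List (Fin cc.N)))) :
    ∃ n₀ : ℕ, ∀ n : ℕ, n₀ ≤ n → ∃ nσ : List (Fin cc.N) → ℕ,
      (∀ σ ∈ Γ, 1 ≤ nσ σ) ∧ (∑ σ ∈ Γ, nσ σ) ≤ n ∧
      (C * cc.xi ^ r)⁻¹ * ∑ σ ∈ Γ, μ.real (cc.Jc σ) * cc.φnorm σ ^ r * unr μ (nσ σ) r ≤
        unr μ n r := by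
  have := hμ.isFiniteMeasure
  obtain ⟨δ, hδ, hne⟩ := hμ.exists_pos_forall_pullback_nonempty hr.le Γ
  obtain ⟨n₀, hn₀⟩ := eventually_atTop.1
    ((tendsto_unr_atTop_zero (μ := μ) hr).eventually_lt_const hδ)
  refine ⟨n₀, fun n hn => ?_⟩
  let A : Set (Finset ℝ) := {α | α.card ≤ n ∧ ∫ x, boundaryCost α r x ∂μ < δ}
  let bound : Finset ℝ → ℝ := fun α =>
    ∑ σ ∈ Γ, μ.real (cc.Jc σ) * cc.φnorm σ ^ r * unr μ (cc.pullback σ α).card r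
  have hA : A.Nonempty := exists_integral_boundaryCost_lt (hn₀ n hn)
  have hfin : (bound '' A).Finite := (CookieCutter.finite_image_sum_card_pullback hΓ
    (fun σ k => μ.real (cc.Jc σ) * cc.φnorm σ ^ r * unr μ k r) n).subset
      (image_mono fun α hα => hα.1)
  obtain ⟨α, hα, hmin⟩ := hfin.exists_minimalFor' _ _ hA
  refine ⟨fun σ => (cc.pullback σ α).card, fun σ hσ => (hne α hα.2 σ hσ).card_pos,
    (CookieCutter.sum_card_pullback_le hΓ α).trans hα.1,
    le_unr_of_forall_lt (hn₀ n hn) fun β hβn hβδ => ?_⟩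
  have hle : bound α ≤ bound β := le_of_not_gt fun hlt => hlt.not_ge (hmin ⟨hβn, hβδ⟩ hlt.le)
  have hC := hμ.const_pos
  have hξ := cc.xi_pos
  calc (C * cc.xi ^ r)⁻¹ * bound α ≤ (C * cc.xi ^ r)⁻¹ * bound β := by gcongr
    _ ≤ ∫ x, boundaryCost β r x ∂μ := hμ.sum_mul_unr_card_pullback_le hr.le hΓ β

theorem unr_lower_bound (cc : CookieCutter) (Q : ℝ → ℝ)
    (hQ : ∀ t : ℝ, Filter.Tendsto
      (fun k : ℕ => (1 / (k : ℝ)) * Real.log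
        (∑ σ : Fin k → Fin cc.N, cc.φnorm (List.ofFn σ) ^ t))
      Filter.atTop (nhds (Q t)))
    (h : ℝ) (hh0 : 0 < h) (hQh : Q h = 0)
    (μ : MeasureTheory.Measure ℝ) (hμ : cc.IsGibbsLike μ h) (r : ℝ) (hr : 0 < r)
    (Γ : Finset (List (Fin cc.N))) (hΓ : cc.IsFMA Γ) :
    ∃ n₀ : ℕ, ∀ n : ℕ, n₀ ≤ n → ∃ nσ : List (Fin cc.N) → ℕ,
      (∀ σ ∈ Γ, 1 ≤ nσ σ) ∧ (∑ σ ∈ Γ, nσ σ) ≤ n ∧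
      (cc.Lconst h * cc.xi ^ r)⁻¹ *
          ∑ σ ∈ Γ, (μ (cc.Jc σ)).toReal * cc.φnorm σ ^ r * unr μ (nσ σ) r ≤
        unr μ n r :=
  unr_lower_bound_general (hμ.isSupermultiplicative hh0.le) hr hΓ.isAntichain
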